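/- The selfishness level of the Traveler's Dilemma game, the two-player game with strategy sets S_1 = S_2 = {2, 3, ..., 100} and payoffs p_i(s) := s_i if s_i = s_{-i}, p_i(s) := s_i + 2 if s_i < s_{-i}, and p_i(s) := s_{-i} − 2 otherwise, equals 1/2. -/

import Mathlib

open Finset
open scoped ENNReal

/-- A strategic game with `n` players: each player `i` has a nonempty strategy
set `S i` and a real-valued payoff function `p i` on joint strategies. -/
structure Game (n : ℕ) where
  S : Fin n → Type
  ne : ∀ i, Nonempty (S i)
  p : Fin n → ((j : Fin n) → S j) → ℝ

namespace Game

variable {n : ℕ}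

/-- The social welfare of a joint strategy. -/
def SW (G : Game n) (s : (j : Fin n) → G.S j) : ℝ := ∑ i, G.p i s

/-- A joint strategy is a social optimum if it maximizes the social welfare. -/
def SocialOptimum (G : Game n) (s : (j : Fin n) → G.S j) : Prop :=
  ∀ t, G.SW t ≤ G.SW s

/-- A joint strategy is a (pure) Nash equilibrium if no unilateral deviation is profitable. -/
def NashEq (G : Game n) (s : (j : Fin n) → G.S j) : Prop :=
  ∀ (i : Fin n) (s' : G.S i), G.p i (Function.update s i s') ≤ G.p i s

/-- The altruistic version `G(α)` of a game `G`. -/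
def alt (G : Game n) (α : ℝ) : Game n where
  S := G.S
  ne := G.ne
  p := fun i s => G.p i s + α * G.SW s

/-- `G` is `α`-selfish if some pure Nash equilibrium of `G(α)` is a social optimum of `G`. -/
def Selfish (G : Game n) (α : ℝ) : Prop :=
  ∃ s, (G.alt α).NashEq s ∧ G.SocialOptimum s

/-- The selfishness level of `G`: the infimum of the nonnegative `α` for which `G`
is `α`-selfish (`⊤` if there is no such `α`). -/
noncomputable def selfishnessLevel (G : Game n) : ℝ≥0∞ :=
  sInf {x : ℝ≥0∞ | ∃ α : ℝ, 0 ≤ α ∧ G.Selfish α ∧ x = ENNReal.ofReal α}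

/-- A social optimum is stable if no player profits from a unilateral deviation
to another social optimum. -/
def StableOptimum (G : Game n) (s : (j : Fin n) → G.S j) : Prop :=
  G.SocialOptimum s ∧ ∀ (i : Fin n) (s' : G.S i),
    G.SocialOptimum (Function.update s i s') →
      G.p i (Function.update s i s') ≤ G.p i s

/-- The appeal factor of a unilateral deviation `s'` of player `i` from `s`. -/
noncomputable def AF (G : Game n) (s : (j : Fin n) → G.S j) (i : Fin n) (s' : G.S i) : ℝ :=
  (G.p i (Function.update s i s') - G.p i s) /
    (G.SW s - G.SW (Function.update s i s'))

end Game


/-- The Traveler's Dilemma game: two players with strategies `{2, ..., 100}`; a player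
matching the other's choice gets that amount, undercutting earns a bonus of `2`, and
overbidding incurs a penalty of `2`. -/
def travelersDilemma : Game 2 where
  S := fun _ => {k : ℕ // 2 ≤ k ∧ k ≤ 100}
  ne := fun _ => ⟨⟨2, le_refl 2, by norm_num⟩⟩
  p := fun i s =>
    if (s i).1 = (s (i + 1)).1 then ((s i).1 : ℝ)
    else if (s i).1 < (s (i + 1)).1 then ((s i).1 : ℝ) + 2
    else ((s (i + 1)).1 : ℝ) - 2

/-!
Deviating from one social optimum to another leaves the welfare term of `G(α)` unchanged, so that
altruism cannot deter it; any other deviation lowers the welfare and is deterred exactly when `α` is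
at least its appeal factor. If the social optimum is unique, the selfishness level is thus governed
by the largest appeal factor. The social welfare of the Traveler's Dilemma is twice the smaller
claim, so `(100, 100)` is its only social optimum, and undercutting it by `d ≥ 1` has appeal factor
`(2 - d) / (2 d) = 1 / d - 1 / 2`, which is largest at `d = 1`, with value `1 / 2`.
-/

namespace Game

variable {n : ℕ} {G : Game n} {s t : (j : Fin n) → G.S j} {α : ℝ}

theorem SocialOptimum.SW_eq (hs : G.SocialOptimum s) (ht : G.SocialOptimum t) :
    G.SW t = G.SW s :=
  (hs t).antisymm (ht s)

theorem SocialOptimum.SW_lt (hs : G.SocialOptimum s) (ht : ¬ G.SocialOptimum t) :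
    G.SW t < G.SW s :=
  (hs t).lt_of_ne fun h => ht fun u => h ▸ hs u

theorem nashEq_alt_iff :
    (G.alt α).NashEq s ↔ ∀ (i : Fin n) (s' : G.S i),
      G.p i (Function.update s i s') + α * G.SW (Function.update s i s') ≤
        G.p i s + α * G.SW s :=
  Iff.rfl

theorem AF_le_iff {i : Fin n} {s' : G.S i} (h : G.SW (Function.update s i s') < G.SW s) :
    G.AF s i s' ≤ α ↔
      G.p i (Function.update s i s') + α * G.SW (Function.update s i s') ≤
        G.p i s + α * G.SW s := by
  rw [AF, div_le_iff₀ (sub_pos.2 h)]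
  constructor <;> intro hle <;> linarith

theorem SocialOptimum.nashEq_alt_iff (hs : G.SocialOptimum s) :
    (G.alt α).NashEq s ↔ G.StableOptimum s ∧
      ∀ (i : Fin n) (s' : G.S i), ¬ G.SocialOptimum (Function.update s i s') →
        G.AF s i s' ≤ α := by
  rw [Game.nashEq_alt_iff]
  constructor
  · intro hN
    refine ⟨⟨hs, fun i s' hopt => ?_⟩, fun i s' hopt => (AF_le_iff (hs.SW_lt hopt)).2 (hN i s')⟩
    simpa only [hs.SW_eq hopt, add_le_add_iff_right] using hN i s'
  · rintro ⟨⟨-, hstable⟩, hAF⟩ i s'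
    by_cases hopt : G.SocialOptimum (Function.update s i s')
    · simpa only [hs.SW_eq hopt, add_le_add_iff_right] using hstable i s' hopt
    · exact (AF_le_iff (hs.SW_lt hopt)).1 (hAF i s' hopt)

theorem selfish_iff_exists_stableOptimum :
    G.Selfish α ↔ ∃ s, G.StableOptimum s ∧
      ∀ (i : Fin n) (s' : G.S i), ¬ G.SocialOptimum (Function.update s i s') →
        G.AF s i s' ≤ α := by
  constructor
  · rintro ⟨s, hN, hs⟩
    exact ⟨s, hs.nashEq_alt_iff.1 hN⟩
  · rintro ⟨s, hs, hAF⟩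
    exact ⟨s, hs.1.nashEq_alt_iff.2 ⟨hs, hAF⟩, hs.1⟩

theorem stableOptimum_iff_of_unique (hs : ∀ t, G.SocialOptimum t ↔ t = s) :
    G.StableOptimum t ↔ t = s := by
  refine ⟨fun ht => (hs t).1 ht.1, ?_⟩
  rintro rfl
  exact ⟨(hs t).2 rfl, fun i s' hopt => by rw [(hs _).1 hopt]⟩

theorem selfish_iff_forall_AF_le_of_unique (hs : ∀ t, G.SocialOptimum t ↔ t = s) :
    G.Selfish α ↔ ∀ (i : Fin n) (s' : G.S i), s' ≠ s i → G.AF s i s' ≤ α := by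
  simp only [selfish_iff_exists_stableOptimum, stableOptimum_iff_of_unique hs, exists_eq_left, hs,
    Function.update_eq_self_iff, ne_eq]

theorem selfishnessLevel_eq_of_isLeast (h : IsLeast {a : ℝ | 0 ≤ a ∧ G.Selfish a} α) :
    G.selfishnessLevel = ENNReal.ofReal α := by
  refine IsLeast.csInf_eq ⟨⟨α, h.1.1, h.1.2, rfl⟩, ?_⟩
  rintro _ ⟨a, ha, hselfish, rfl⟩
  exact ENNReal.ofReal_le_ofReal (h.2 ⟨ha, hselfish⟩)

end Game

namespace travelersDilemma

theorem p_eq (i : Fin 2) (s : (j : Fin 2) → travelersDilemma.S j) :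
    travelersDilemma.p i s =
      if (s i).1 = (s (i + 1)).1 then ((s i).1 : ℝ)
      else if (s i).1 < (s (i + 1)).1 then ((s i).1 : ℝ) + 2
      else ((s (i + 1)).1 : ℝ) - 2 :=
  rfl

theorem SW_eq_two_mul_min (s : (j : Fin 2) → travelersDilemma.S j) :
    travelersDilemma.SW s = 2 * min ((s 0).1 : ℝ) ((s 1).1 : ℝ) := by
  have h : travelersDilemma.SW s = travelersDilemma.p 0 s + travelersDilemma.p 1 s :=
    Fin.sum_univ_two _
  rw [h, p_eq, p_eq]
  simp only [Fin.isValue, Fin.reduceAdd]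
  rcases lt_trichotomy (s 0).1 (s 1).1 with h | h | h
  · rw [if_neg h.ne, if_pos h, if_neg h.ne', if_neg h.not_gt, min_eq_left (mod_cast h.le)]
    ring
  · rw [if_pos h, if_pos h.symm, h, min_self]
    ring
  · rw [if_neg h.ne', if_neg h.not_gt, if_neg h.ne, if_pos h, min_eq_right (mod_cast h.le)]
    ring

/-- The joint strategy `(100, 100)`, the unique social optimum of the Traveler's Dilemma. -/
def maxClaims (j : Fin 2) : travelersDilemma.S j :=
  (⟨100, by norm_num, le_rfl⟩ : {k : ℕ // 2 ≤ k ∧ k ≤ 100})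

theorem SW_maxClaims : travelersDilemma.SW maxClaims = 200 := by
  rw [SW_eq_two_mul_min]
  norm_num [maxClaims]

theorem p_maxClaims (i : Fin 2) : travelersDilemma.p i maxClaims = 100 := by
  simp [p_eq, maxClaims]

theorem socialOptimum_iff (s : (j : Fin 2) → travelersDilemma.S j) :
    travelersDilemma.SocialOptimum s ↔ s = maxClaims := by
  constructor
  · intro hs
    have hmin : (100 : ℝ) ≤ min ((s 0).1 : ℝ) ((s 1).1 : ℝ) := by
      linarith [hs maxClaims, SW_maxClaims, SW_eq_two_mul_min s]
    obtain ⟨h0, h1⟩ := le_min_iff.1 hmin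
    have hge : ∀ j, 100 ≤ (s j).1 := Fin.forall_fin_two.2 ⟨mod_cast h0, mod_cast h1⟩
    exact funext fun j => Subtype.ext ((s j).2.2.antisymm (hge j))
  · rintro rfl t
    have hmin : min ((t 0).1 : ℝ) ((t 1).1 : ℝ) ≤ 100 :=
      (min_le_left _ _).trans (mod_cast (t 0).2.2)
    linarith [SW_maxClaims, SW_eq_two_mul_min t]

variable {i : Fin 2} {k : travelersDilemma.S i}

theorem SW_update_maxClaims :
    travelersDilemma.SW (Function.update maxClaims i k) = 2 * (k.1 : ℝ) := by
  have hk : (k.1 : ℝ) ≤ 100 := mod_cast k.2.2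
  rw [SW_eq_two_mul_min]
  fin_cases i
  · exact congrArg (2 * ·) (min_eq_left hk)
  · exact congrArg (2 * ·) (min_eq_right hk)

theorem p_update_maxClaims (hk : k.1 < 100) :
    travelersDilemma.p i (Function.update maxClaims i k) = (k.1 : ℝ) + 2 := by
  have hi : i + 1 ≠ i := by simp
  rw [p_eq, Function.update_self, Function.update_of_ne hi]
  exact (if_neg hk.ne).trans (if_pos hk)

theorem AF_maxClaims (hk : k.1 < 100) :
    travelersDilemma.AF maxClaims i k = 1 / (100 - k.1) - 1 / 2 := by
  have hgap : (100 : ℝ) - k.1 ≠ 0 := sub_ne_zero.2 (Nat.cast_lt.2 hk).ne'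
  calc travelersDilemma.AF maxClaims i k
      = ((k.1 + 2 : ℝ) - 100) / (200 - 2 * k.1) := by
        rw [Game.AF, p_update_maxClaims hk, SW_update_maxClaims, p_maxClaims, SW_maxClaims]
    _ = (2 - (100 - k.1 : ℝ)) / (2 * (100 - k.1)) := by ring_nf
    _ = 1 / (100 - k.1) - 1 / 2 := by field_simp

theorem AF_maxClaims_le (hk : k.1 < 100) : travelersDilemma.AF maxClaims i k ≤ 1 / 2 := by
  have hgap : (1 : ℝ) ≤ 100 - k.1 := by
    have : (k.1 : ℝ) + 1 ≤ 100 := mod_cast hk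
    linarith
  have hinv : 1 / (100 - k.1 : ℝ) ≤ 1 := (div_le_one₀ (by linarith)).2 hgap
  linarith [AF_maxClaims hk]

theorem selfish_iff {α : ℝ} : travelersDilemma.Selfish α ↔ 1 / 2 ≤ α := by
  rw [Game.selfish_iff_forall_AF_le_of_unique socialOptimum_iff]
  constructor
  · intro h
    let undercut : travelersDilemma.S 0 :=
      (⟨99, by norm_num, by norm_num⟩ : {k : ℕ // 2 ≤ k ∧ k ≤ 100})
    have hlt : undercut.1 < 100 := by decide
    have hAF : travelersDilemma.AF maxClaims 0 undercut = 1 / 2 := by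
      rw [AF_maxClaims hlt]
      norm_num [undercut]
    exact hAF ▸ h 0 undercut fun heq => hlt.ne (congrArg Subtype.val heq)
  · intro hα i k hk
    have hlt : k.1 < 100 := k.2.2.lt_of_ne fun heq => hk (Subtype.ext heq)
    exact (AF_maxClaims_le hlt).trans hα

end travelersDilemma

/-- the selfishness level of the Traveler's Dilemma game equals `1/2`. -/
theorem selfishnessLevel_travelersDilemma :
    travelersDilemma.selfishnessLevel = ENNReal.ofReal (1 / 2) := by
  refine Game.selfishnessLevel_eq_of_isLeast ⟨⟨by norm_num, ?_⟩, ?_⟩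
  · exact travelersDilemma.selfish_iff.2 le_rfl
  · exact fun α hα => travelersDilemma.selfish_iff.1 hα.2
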